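/- Let n ≥ 2 be an integer and p an odd prime with p ≥ 2n−5. If a is an integer that is a nonzero square modulo p, then for any integer s with s² ≡ a (mod p^n) one has Kl_{p^n}(a,1) = 2·(s/p^n)·cos(4πs/p^n + θ_{p^n}), where (s/p^n) is the Jacobi symbol (equivalently, the n-th power of the Legendre symbol of s modulo p), θ_{p^n} = 0 if n is even or p ≡ 1 (mod 4), and θ_{p^n} = π/2 if n is odd and p ≡ 3 (mod 4); in particular the right-hand side is independent of the choice of such s. -/

import Mathlib

open scoped BigOperators
open Filter MeasureTheory

noncomputable section

/-- `e(z) = exp(2πiz)`. -/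
def eC (z : ℝ) : ℂ := Complex.exp (2 * Real.pi * Complex.I * z)

/-- The additive character `x ↦ e(x/q)` on `ZMod q`. -/
def eMod (q : ℕ) (x : ZMod q) : ℂ := eC ((x.val : ℝ) / q)

/-- Partial normalized Kloosterman sum
`p^{-n/2} ∑_{1 ≤ x ≤ j, p ∤ x} e((a x + b x̄)/p^n)`. -/
def klPartial (p n : ℕ) (j : ℕ) (a b : ZMod (p ^ n)) : ℂ :=
  (Real.sqrt ((p : ℝ) ^ n))⁻¹ *
    ∑ x ∈ (Finset.Icc 1 j).filter (fun x => ¬ p ∣ x),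
      eMod (p ^ n) (a * (x : ZMod (p ^ n)) + b * (x : ZMod (p ^ n))⁻¹)

/-- The complete normalized Kloosterman sum `Kl_{p^n}(a,b)`. -/
def klFull (p n : ℕ) (a b : ZMod (p ^ n)) : ℂ := klPartial p n (p ^ n) a b

/-- The `i`-th element (1-indexed) of `J_p^n = {1 ≤ j ≤ p^n : p ∤ j}`. -/
def jIdx (p i : ℕ) : ℕ := i + (i - 1) / (p - 1)

/-- The parametrized Kloosterman path `t ↦ Kl_{p^n}(t;(a,b))`. -/
def klPath (p n : ℕ) (a b : ZMod (p ^ n)) (t : ℝ) : ℂ :=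
  let m : ℕ := (p ^ n).totient - 1
  let i : ℕ := max 1 (Int.toNat ⌈(m : ℝ) * t⌉)
  klPartial p n (jIdx p i) a b +
    ((((m : ℝ) * t - ((i : ℝ) - 1) : ℝ)) : ℂ) *
      (klPartial p n (jIdx p (i + 1)) a b - klPartial p n (jIdx p i) a b)

/-- `x_k(t) = φ(p^n) t + k - 1`, where `k = ⌈p^{n-1} t⌉` is determined by
`t ∈ ((k-1)/p^{n-1}, k/p^{n-1}]`. -/
def xkf (p n : ℕ) (t : ℝ) : ℝ :=
  ((p ^ n).totient : ℝ) * t + ((⌈(p : ℝ) ^ (n - 1) * t⌉ : ℤ) : ℝ) - 1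

/-- The discrete Fourier coefficient `α_{p^n}(h;t) = p^{-n/2} ∑_{1 ≤ x ≤ x_k(t)} e(hx/p^n)`. -/
def alphaF (p n : ℕ) (h : ℤ) (t : ℝ) : ℂ :=
  (Real.sqrt ((p : ℝ) ^ n))⁻¹ *
    ∑ x ∈ Finset.Icc 1 (⌊xkf p n t⌋.toNat), eC ((h : ℝ) * (x : ℝ) / (p : ℝ) ^ n)

/-- `β(h;t)`: `t` for `h = 0` and `(e(ht)-1)/(2πih)` otherwise. -/
def betaF (h : ℤ) (t : ℝ) : ℂ :=
  if h = 0 then (t : ℂ) else (eC ((h : ℝ) * t) - 1) / (2 * Real.pi * Complex.I * h)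

/-- The completed step path `K̃l_{p^n}(t;(a,b))`. -/
def klStep (p n : ℕ) (a b : ZMod (p ^ n)) (t : ℝ) : ℂ :=
  klPartial p n (⌊xkf p n t⌋.toNat) a b

/-- The measure `μ = (1/2)δ₀ + μ₁` where `dμ₁ = (2π√(4-x²))⁻¹ 1_{(-2,2)} dx`. -/
def muKl : Measure ℝ :=
  (1 / 2 : ENNReal) • Measure.dirac (0 : ℝ) +
    volume.withDensity (fun x =>
      ENNReal.ofReal
        (Set.indicator (Set.Ioo (-2 : ℝ) 2)
          (fun y => 1 / (2 * Real.pi * Real.sqrt (4 - y ^ 2))) x))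

/-!
As `s²` is the product of the two coefficients, which are units, rescaling the summation variable
reduces the Kloosterman sum to `∑ e(s(x + x⁻¹)/N)`, where `N = p ^ n = a² q` with `a` a power of `p`
and `q ∈ {1, p}`. Averaging over the translations `x ↦ x(1 + aqt)`, for which `(aq)² = 0` in `ℤ/N`,
leaves only `x = ±(1 + r)` with `aqr = 0`. Then `r³ = 0`, so `x + x⁻¹` is exactly `±(2 + r²)`, and
the sum over `r` is `a` times a quadratic Gauss sum modulo `q`.

The sign of that Gauss sum `G` for `q = 2m + 1` prime comes from a comparison with Gauss's product
`∏ (w ^ k - w ^ (-k))`, whose square is `G²` and whose phase is visible from its factors. Modulo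
`q`, the cyclotomic polynomial is `(X - 1) ^ (q - 1)`, so a relation `G = ±∏` can be tested by
applying `X d/dX` to it `m` times and setting `X = 1`; Wilson's theorem then identifies the sign.
-/

section EulerOperator

open Polynomial

/-- The Euler operator `X · d/dX`. It has `X ^ k` as an eigenvector of eigenvalue `k`, so evaluating
its powers at `1` produces power sums, and these values vanish on multiples of a high power of
`X - 1`. -/
def eulerOp (R : Type*) [CommSemiring R] : Module.End R R[X] :=
  LinearMap.mulLeft R X ∘ₗ derivative

lemma eulerOp_apply {R : Type*} [CommSemiring R] (f : R[X]) : eulerOp R f = X * derivative f :=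
  rfl

lemma eulerOp_X_pow {R : Type*} [CommSemiring R] (k : ℕ) :
    eulerOp R (X ^ k) = (k : R) • X ^ k := by
  rcases k with _ | k
  · simp [eulerOp_apply]
  · rw [eulerOp_apply, derivative_X_pow, Nat.add_sub_cancel, smul_eq_C_mul]
    ring

lemma eulerOp_pow_X_pow {R : Type*} [CommSemiring R] (j k : ℕ) :
    (eulerOp R ^ j) (X ^ k) = (k : R) ^ j • X ^ k := by
  induction j with
  | zero => simp
  | succ j ih =>
    rw [pow_succ', Module.End.mul_apply, ih, map_smul, eulerOp_X_pow, smul_smul, pow_succ]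

variable {R : Type*} [CommRing R]

lemma eulerOp_X_sub_one_pow_succ_mul (j : ℕ) (f : R[X]) :
    eulerOp R ((X - 1) ^ (j + 1) * f) =
      (X - 1) ^ j * (((j : R[X]) + 1) * X * f + (X - 1) * X * derivative f) := by
  simp only [eulerOp_apply, derivative_mul, derivative_pow, derivative_sub, derivative_X,
    derivative_one, C_eq_natCast, Nat.add_sub_cancel]
  push_cast
  ring

lemma eval_one_eulerOp_pow_X_sub_one_pow_mul (j : ℕ) (f : R[X]) :
    eval 1 ((eulerOp R ^ j) ((X - 1) ^ j * f)) = j.factorial * eval 1 f := by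
  induction j generalizing f with
  | zero => simp
  | succ j ih =>
    rw [pow_succ, Module.End.mul_apply, eulerOp_X_sub_one_pow_succ_mul, ih, Nat.factorial_succ]
    simp only [eval_add, eval_mul, eval_sub, eval_X, eval_one, eval_natCast, sub_self]
    push_cast
    ring

lemma eval_one_eulerOp_pow_eq_zero_of_dvd {j k : ℕ} (hjk : j < k) {f : R[X]}
    (hf : (X - 1) ^ k ∣ f) : eval 1 ((eulerOp R ^ j) f) = 0 := by
  obtain ⟨g, rfl⟩ := (pow_dvd_pow (X - 1) (Nat.succ_le_of_lt hjk)).trans hf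
  rw [pow_succ, mul_assoc, eval_one_eulerOp_pow_X_sub_one_pow_mul]
  simp

lemma exists_X_pow_sub_X_pow_eq_X_sub_one_mul (i j : ℕ) :
    ∃ g : R[X], X ^ i - X ^ j = (X - 1) * g ∧ eval 1 g = (i : R) - j := by
  refine ⟨(∑ k ∈ Finset.range i, X ^ k) - ∑ k ∈ Finset.range j, X ^ k, ?_, ?_⟩
  · rw [mul_sub, mul_geom_sum, mul_geom_sum]
    ring
  · simp [eval_finsetSum]

/-- Reduction of `f` modulo `p` turns the cyclotomic polynomial into `(X - 1) ^ (p - 1)`. -/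
lemma X_sub_one_pow_dvd_map_of_aeval_eq_zero {p : ℕ} [Fact p.Prime] {K : Type*} [Field K]
    [CharZero K] {w : K} (hw : IsPrimitiveRoot w p) {f : ℤ[X]} (hf : aeval w f = 0) :
    (X - 1) ^ (p - 1) ∣ f.map (Int.castRingHom (ZMod p)) := by
  have hp : p.Prime := Fact.out
  have hdvd : cyclotomic p ℤ ∣ f := by
    rw [cyclotomic_eq_minpoly hw hp.pos]
    exact minpoly.isIntegrallyClosed_dvd (hw.isIntegral hp.pos) hf
  have hcyc : cyclotomic p (ZMod p) = (X - 1) ^ (p - 1) := by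
    simpa using cyclotomic_mul_prime_eq_pow_of_not_dvd (ZMod p) (p := p) (n := 1) hp.not_dvd_one
  rw [← hcyc, ← map_cyclotomic p (Int.castRingHom (ZMod p))]
  exact Polynomial.map_dvd _ hdvd

end EulerOperator

section GaussProduct

open Polynomial

/-- Gauss's product `∏ (w ^ k - w ^ (-k))` over `1 ≤ k ≤ m`, for `w` a root of unity of order
`2 * m + 1`. The negative powers are reduced modulo the order, so that the product also makes sense
for the indeterminate of a polynomial ring. -/
def gaussProduct {R : Type*} [CommRing R] (m : ℕ) (w : R) : R :=
  ∏ k ∈ Finset.range m, (w ^ (k + 1) - w ^ (2 * m - k))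

lemma map_gaussProduct {R S F : Type*} [CommRing R] [CommRing S] [FunLike F R S]
    [RingHomClass F R S] (f : F) (m : ℕ) (w : R) :
    f (gaussProduct m w) = gaussProduct m (f w) := by
  simp [gaussProduct, map_prod]

lemma gaussProduct_sq_of_isPrimitiveRoot {R : Type*} [CommRing R] [IsDomain R] {m : ℕ} {w : R}
    (hw : IsPrimitiveRoot w (2 * m + 1)) : gaussProduct m w ^ 2 = (-1) ^ m * (2 * m + 1) := by
  have hprod : ∏ k ∈ Finset.range (m + m), (1 - (w ^ 2) ^ (k + 1)) = 2 * (m : R) + 1 := by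
    have h := (hw.pow_of_coprime 2 (by simp)).prod_one_sub_pow_eq_order
    rw [two_mul] at h
    rw [h]
    push_cast
    ring
  rw [Finset.prod_range_add,
    ← Finset.prod_range_reflect (fun k => 1 - (w ^ 2) ^ (m + k + 1)),
    ← Finset.prod_mul_distrib] at hprod
  have hconst : ∏ _k ∈ Finset.range m, (-1 : R) = (-1) ^ m := by simp
  rw [← hprod, ← hconst, gaussProduct, ← Finset.prod_pow, ← Finset.prod_mul_distrib]
  refine Finset.prod_congr rfl fun k hk => ?_
  have hkm := Finset.mem_range.1 hk
  have hinv : w ^ (k + 1) * w ^ (2 * m - k) = 1 := by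
    rw [← pow_add, show k + 1 + (2 * m - k) = 2 * m + 1 by omega, hw.pow_eq_one]
  rw [show m + (m - 1 - k) + 1 = 2 * m - k by omega, pow_right_comm w 2, pow_right_comm w 2]
  linear_combination (w ^ (k + 1) * w ^ (2 * m - k) - 1) * hinv

lemma eval_one_eulerOp_pow_gaussProduct_X {R : Type*} [CommRing R] (m : ℕ) :
    eval 1 ((eulerOp R ^ m) (gaussProduct m X)) =
      m.factorial * ∏ k ∈ Finset.range m, (((k + 1 : ℕ) : R) - (2 * m - k : ℕ)) := by
  choose g hg hg1 using fun k : ℕ =>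
    exists_X_pow_sub_X_pow_eq_X_sub_one_mul (R := R) (k + 1) (2 * m - k)
  simp_rw [gaussProduct, hg, Finset.prod_mul_distrib, Finset.prod_const, Finset.card_range,
    eval_one_eulerOp_pow_X_sub_one_pow_mul, eval_prod, hg1]

lemma eval_one_eulerOp_pow_gaussProduct_X_zmod (m : ℕ) :
    eval 1 ((eulerOp (ZMod (2 * m + 1)) ^ m) (gaussProduct m X)) =
      2 ^ m * (m.factorial : ZMod (2 * m + 1)) ^ 2 := by
  have hmod : 2 * (m : ZMod (2 * m + 1)) + 1 = 0 := by
    exact_mod_cast ZMod.natCast_self (2 * m + 1)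
  have hfactor : ∀ k ∈ Finset.range m,
      ((k + 1 : ℕ) : ZMod (2 * m + 1)) - (2 * m - k : ℕ) = 2 * (k + 1 : ℕ) := by
    intro k hk
    have hkm := Finset.mem_range.1 hk
    rw [Nat.cast_sub (by omega)]
    push_cast
    linear_combination -hmod
  rw [eval_one_eulerOp_pow_gaussProduct_X, Finset.prod_congr rfl hfactor, Finset.prod_mul_distrib,
    Finset.prod_const, Finset.card_range, ← Nat.cast_prod, Finset.prod_range_add_one_eq_factorial]
  ring

/-- The polynomial whose value at `w` is the quadratic Gauss sum attached to the root of unity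
`w ^ 2` of order `n`. -/
def gaussPolynomial (n : ℕ) [NeZero n] (R : Type*) [CommRing R] : R[X] :=
  ∑ x : ZMod n, X ^ (2 * x.val ^ 2)

lemma eval_one_eulerOp_pow_gaussPolynomial (n : ℕ) [NeZero n] (j : ℕ) :
    eval 1 ((eulerOp (ZMod n) ^ j) (gaussPolynomial n (ZMod n))) =
      ∑ x : ZMod n, (2 * x ^ 2) ^ j := by
  simp [gaussPolynomial, eval_finsetSum, eulerOp_pow_X_pow]

lemma sum_pow_card_sub_one (F : Type*) [Field F] [Fintype F] :
    ∑ x : F, x ^ (Fintype.card F - 1) = -1 := by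
  classical
  have hcard : Fintype.card F - 1 ≠ 0 := Nat.sub_ne_zero_of_lt Fintype.one_lt_card
  have hpow (x : F) : x ^ (Fintype.card F - 1) = 1 - if x = 0 then 1 else 0 := by
    split_ifs with hx
    · simp [hx, hcard]
    · simp [FiniteField.pow_card_sub_one_eq_one x hx]
  simp [hpow, Finset.sum_sub_distrib]

lemma ringChar_zmod_two_mul_add_one_ne_two (m : ℕ) : ringChar (ZMod (2 * m + 1)) ≠ 2 := by
  rw [ZMod.ringChar_zmod_n]
  omega

lemma factorial_sq_zmod (m : ℕ) [Fact (2 * m + 1).Prime] :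
    (m.factorial : ZMod (2 * m + 1)) ^ 2 = (-1) ^ (m + 1) := by
  have hwilson := ZMod.wilsons_lemma (2 * m + 1)
  have hdesc := ZMod.cast_descFactorial (n := m) (p := 2 * m + 1) (by omega)
  have hsplit := Nat.factorial_mul_descFactorial (n := 2 * m) (k := m) (by omega)
  rw [show 2 * m - m = m by omega] at hsplit
  rw [Nat.add_sub_cancel] at hwilson hdesc
  rw [← hsplit, Nat.cast_mul, hdesc] at hwilson
  have hsign : (-1 : ZMod (2 * m + 1)) ^ m * (-1) ^ m = 1 := by simp [← mul_pow]
  linear_combination (-1) ^ m * hwilson - (m.factorial : ZMod (2 * m + 1)) ^ 2 * hsign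

/-- The Gauss sum and the Gauss product are compared modulo `(1 - w) ^ (m + 1)`: applying the Euler
operator `m` times and setting `X = 1` reduces the comparison to Wilson's theorem. -/
lemma intCast_eq_neg_one_pow_of_aeval_gaussPolynomial {m : ℕ} [Fact (2 * m + 1).Prime] {K : Type*}
    [Field K] [CharZero K] {w : K} (hw : IsPrimitiveRoot w (2 * m + 1)) {ε : ℤ}
    (hε : aeval w (gaussPolynomial (2 * m + 1) ℤ) = ε * gaussProduct m w) :
    (ε : ZMod (2 * m + 1)) = (-1) ^ m := by
  have hm : 0 < m := by
    have := (Fact.out : (2 * m + 1).Prime).two_le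
    omega
  have hroot : aeval w (gaussPolynomial (2 * m + 1) ℤ - C ε * gaussProduct m X) = 0 := by
    rw [map_sub, hε, map_mul, map_gaussProduct, aeval_X, aeval_C, algebraMap_int_eq, eq_intCast,
      sub_self]
  have hvanish := eval_one_eulerOp_pow_eq_zero_of_dvd (j := m) (by omega)
    (X_sub_one_pow_dvd_map_of_aeval_eq_zero hw hroot)
  have hmap : (gaussPolynomial (2 * m + 1) ℤ - C ε * gaussProduct m X).map
      (Int.castRingHom (ZMod (2 * m + 1))) =
      gaussPolynomial (2 * m + 1) (ZMod (2 * m + 1)) -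
        (ε : ZMod (2 * m + 1)) • gaussProduct m X := by
    rw [← coe_mapRingHom, map_sub, map_mul, map_gaussProduct, smul_eq_C_mul]
    simp [gaussPolynomial]
  have hsum : ∑ x : ZMod (2 * m + 1), (2 * x ^ 2) ^ m = -2 ^ m := by
    have h := sum_pow_card_sub_one (ZMod (2 * m + 1))
    rw [ZMod.card, Nat.add_sub_cancel] at h
    simp_rw [mul_pow, ← pow_mul, ← Finset.mul_sum, h]
    ring
  have htwo : (2 : ZMod (2 * m + 1)) ^ m ≠ 0 :=
    pow_ne_zero m (Ring.two_ne_zero (ringChar_zmod_two_mul_add_one_ne_two m))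
  rw [hmap, map_sub, map_smul, eval_sub, eval_smul, eval_one_eulerOp_pow_gaussPolynomial,
    eval_one_eulerOp_pow_gaussProduct_X_zmod, factorial_sq_zmod, hsum, smul_eq_mul] at hvanish
  have hsign : (-1 : ZMod (2 * m + 1)) ^ m * (-1) ^ m = 1 := by simp [← mul_pow]
  refine mul_left_cancel₀ htwo ?_
  linear_combination (-1) ^ m * hvanish - ε * 2 ^ m * hsign

end GaussProduct

section QuadraticGaussSum

section FiniteField

variable {F : Type*} [Field F] [Fintype F] [DecidableEq F]

lemma sum_comp_sq {A : Type*} [CommRing A] (hF : ringChar F ≠ 2) (f : F → A) :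
    ∑ x, f (x ^ 2) = ∑ y, (quadraticChar F y + 1 : A) * f y := by
  have hcard (y : F) :
      ((Finset.univ.filter fun x : F => x ^ 2 = y).card : A) = quadraticChar F y + 1 := by
    have h := quadraticChar_card_sqrts hF y
    rw [Set.toFinset_ofPred] at h
    exact_mod_cast congrArg (Int.cast : ℤ → A) h
  rw [← Finset.sum_fiberwise Finset.univ (· ^ 2)]
  refine Finset.sum_congr rfl fun y _ => ?_
  rw [Finset.sum_congr rfl fun x hx => by rw [(Finset.mem_filter.1 hx).2], Finset.sum_const,
    nsmul_eq_mul, hcard]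

variable {A : Type*} [CommRing A] [IsDomain A] {ψ : AddChar F A}

lemma sum_addChar_sq (hF : ringChar F ≠ 2) (hψ : ψ ≠ 1) :
    ∑ x, ψ (x ^ 2) = gaussSum ((quadraticChar F).ringHomComp (Int.castRingHom A)) ψ := by
  simp_rw [sum_comp_sq hF ψ, add_mul, one_mul, Finset.sum_add_distrib,
    AddChar.sum_eq_zero_of_ne_one hψ, add_zero, gaussSum, MulChar.ringHomComp_apply, eq_intCast]

lemma sum_addChar_mul_sq (hF : ringChar F ≠ 2) (hψ : ψ ≠ 1) {c : F} (hc : c ≠ 0) :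
    ∑ x, ψ (c * x ^ 2) = quadraticChar F c * ∑ x, ψ (x ^ 2) := by
  have hshift : AddChar.mulShift ψ c ≠ 1 := AddChar.IsPrimitive.of_ne_one hψ hc
  have hquad : (quadraticChar F c : A) * quadraticChar F c = 1 := by
    rw [← Int.cast_mul, ← sq, quadraticChar_sq_one hc, Int.cast_one]
  have hgauss := gaussSum_mulShift ((quadraticChar F).ringHomComp (Int.castRingHom A)) ψ
    (Units.mk0 c hc)
  rw [Units.val_mk0, ← sum_addChar_sq hF hψ, ← sum_addChar_sq hF hshift,
    MulChar.ringHomComp_apply, eq_intCast] at hgauss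
  rw [← hgauss, ← mul_assoc, hquad, one_mul]
  rfl

lemma sq_sum_addChar_sq (hF : ringChar F ≠ 2) (hA : ringChar A ≠ 2) (hψ : ψ ≠ 1) :
    (∑ x, ψ (x ^ 2)) ^ 2 = quadraticChar F (-1) * Fintype.card F := by
  have hχ : (quadraticChar F).ringHomComp (Int.castRingHom A) ≠ 1 := by
    obtain ⟨a, ha⟩ := quadraticChar_exists_neg_one' hF
    intro h
    have hone := DFunLike.congr_fun h (a : F)
    rw [MulChar.ringHomComp_apply, ha, MulChar.one_apply_coe, map_neg, map_one] at hone
    exact Ring.neg_one_ne_one_of_char_ne_two hA hone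
  rw [sum_addChar_sq hF hψ, gaussSum_sq hχ ((quadraticChar_isQuadratic F).comp _)
    (AddChar.IsPrimitive.of_ne_one hψ), MulChar.ringHomComp_apply, eq_intCast]

end FiniteField

section Sign

open Polynomial

/-- The quadratic Gauss sum `∑ e(c x² / q)`. -/
def quadGaussSum (q : ℕ) [NeZero q] (c : ZMod q) : ℂ :=
  ∑ x : ZMod q, ZMod.stdAddChar (c * x ^ 2)

/-- The phase `θ_q` of the quadratic Gauss sum of odd modulus `q`. -/
def gaussPhase (q : ℕ) : ℝ :=
  if q % 4 = 1 then 0 else Real.pi / 2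

lemma exp_gaussPhase_mul_I (q : ℕ) :
    Complex.exp (gaussPhase q * Complex.I) = if q % 4 = 1 then 1 else Complex.I := by
  rw [gaussPhase]
  split_ifs
  · simp
  · simp [Complex.exp_pi_div_two_mul_I]

/-- The square root of `exp(2πi / (2m + 1))` that is again a root of unity of order `2m + 1`. -/
def oddRoot (m : ℕ) : ℂ :=
  ZMod.stdAddChar ((m + 1 : ℕ) : ZMod (2 * m + 1))

lemma oddRoot_eq_neg_exp (m : ℕ) :
    oddRoot m = -Complex.exp (Real.pi / (2 * m + 1) * Complex.I) := by
  have hne : (2 * (m : ℂ) + 1) ≠ 0 := by exact_mod_cast (2 * m).succ_ne_zero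
  rw [oddRoot, ZMod.stdAddChar_apply, ZMod.toCircle_natCast, neg_eq_neg_one_mul,
    ← Complex.exp_pi_mul_I, ← Complex.exp_add]
  congr 1
  push_cast
  field

lemma oddRoot_pow_two_mul (m k : ℕ) :
    oddRoot m ^ (2 * k) = ZMod.stdAddChar (k : ZMod (2 * m + 1)) := by
  have hmod : 2 * (m : ZMod (2 * m + 1)) + 1 = 0 := by
    exact_mod_cast ZMod.natCast_self (2 * m + 1)
  rw [oddRoot, ← AddChar.map_nsmul_eq_pow, nsmul_eq_mul]
  congr 1
  push_cast
  linear_combination k * hmod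

lemma isPrimitiveRoot_oddRoot (m : ℕ) : IsPrimitiveRoot (oddRoot m) (2 * m + 1) := by
  have hcop : (m + 1).Coprime (2 * m + 1) := by
    rw [show 2 * m + 1 = m + (m + 1) by ring]
    simp
  rw [oddRoot, ZMod.stdAddChar_apply, ZMod.toCircle_natCast]
  convert Complex.isPrimitiveRoot_exp_of_coprime (m + 1) (2 * m + 1) (by omega) hcop using 2
  push_cast
  ring

lemma aeval_oddRoot_gaussPolynomial (m : ℕ) :
    aeval (oddRoot m) (gaussPolynomial (2 * m + 1) ℤ) = quadGaussSum (2 * m + 1) 1 := by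
  simp only [gaussPolynomial, quadGaussSum, map_sum, map_pow, aeval_X, oddRoot_pow_two_mul,
    Nat.cast_pow, ZMod.natCast_zmod_val, one_mul]

lemma oddRoot_pow_sub_pow {m k : ℕ} (hk : k < m) :
    oddRoot m ^ (k + 1) - oddRoot m ^ (2 * m - k) =
      (-1) ^ (k + 1) * Complex.I * (2 * Real.sin (Real.pi * (k + 1) / (2 * m + 1)) : ℝ) := by
  have hinv : oddRoot m ^ (2 * m - k) = (oddRoot m ^ (k + 1))⁻¹ := by
    refine eq_inv_of_mul_eq_one_right ?_
    rw [← pow_add, show k + 1 + (2 * m - k) = 2 * m + 1 by omega,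
      (isPrimitiveRoot_oddRoot m).pow_eq_one]
  have hpow : oddRoot m ^ (k + 1) =
      (-1) ^ (k + 1) * Complex.exp ((Real.pi * (k + 1) / (2 * m + 1) : ℝ) * Complex.I) := by
    rw [oddRoot_eq_neg_exp, neg_pow, ← Complex.exp_nat_mul]
    push_cast
    ring_nf
  rw [hinv, hpow, mul_inv, ← Complex.exp_neg, ← inv_pow, inv_neg_one, Complex.ofReal_mul,
    Complex.ofReal_sin, Complex.sin, neg_mul]
  push_cast
  linear_combination ((-1) ^ (k + 1) * (Complex.exp (Real.pi * (k + 1) / (2 * m + 1) * Complex.I) -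
    Complex.exp (-(Real.pi * (k + 1) / (2 * m + 1) * Complex.I)))) * Complex.I_sq

lemma two_mul_sin_pos {m k : ℕ} (hk : k < m) :
    0 < 2 * Real.sin (Real.pi * (k + 1) / (2 * m + 1)) := by
  refine mul_pos two_pos (Real.sin_pos_of_pos_of_lt_pi (by positivity) ?_)
  rw [div_lt_iff₀ (by positivity), mul_lt_mul_iff_right₀ Real.pi_pos]
  norm_cast
  omega

lemma neg_one_pow_mul_prod_neg_one_pow_mul_I (m : ℕ) :
    (-1 : ℂ) ^ m * ∏ k ∈ Finset.range m, ((-1) ^ (k + 1) * Complex.I) =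
      if Even m then 1 else Complex.I := by
  induction m with
  | zero => simp
  | succ m ih =>
    rw [Finset.prod_range_succ]
    have hstep (P : ℂ) : (-1 : ℂ) ^ (m + 1) * (P * ((-1) ^ (m + 1) * Complex.I)) =
        (-1) ^ m * P * ((-1) ^ m * Complex.I) := by ring
    rw [hstep, ih]
    rcases Nat.even_or_odd m with h | h
    · simp [h, Nat.even_add_one]
    · simp [h, h.neg_one_pow, Nat.not_even_iff_odd.2 h]

/-- The square of the Gauss product is known, and the product is a fourth root of unity times a
product of positive sines. -/
lemma neg_one_pow_mul_gaussProduct_oddRoot (m : ℕ) :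
    (-1) ^ m * gaussProduct m (oddRoot m) =
      (if Even m then 1 else Complex.I) * √(2 * m + 1 : ℝ) := by
  set P : ℝ := ∏ k ∈ Finset.range m, 2 * Real.sin (Real.pi * (k + 1) / (2 * m + 1)) with hP
  have hprod : (-1) ^ m * gaussProduct m (oddRoot m) = (if Even m then 1 else Complex.I) * P := by
    rw [← neg_one_pow_mul_prod_neg_one_pow_mul_I, mul_assoc, hP, Complex.ofReal_prod,
      ← Finset.prod_mul_distrib, gaussProduct]
    exact congrArg _ (Finset.prod_congr rfl fun k hk => oddRoot_pow_sub_pow (Finset.mem_range.1 hk))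
  have hpos : 0 < P := Finset.prod_pos fun k hk => two_mul_sin_pos (Finset.mem_range.1 hk)
  have hphase : (if Even m then 1 else Complex.I) ^ 2 = (-1 : ℂ) ^ m := by
    split_ifs with hm
    · simp [hm.neg_one_pow]
    · simp [(Nat.not_even_iff_odd.1 hm).neg_one_pow]
  have hsq : (P : ℂ) ^ 2 = 2 * m + 1 := by
    have h := congrArg (· ^ 2) hprod
    simp only [mul_pow, hphase, gaussProduct_sq_of_isPrimitiveRoot (isPrimitiveRoot_oddRoot m),
      ← pow_mul, mul_comm m 2, pow_mul (-1 : ℂ) 2, neg_one_sq, one_pow, one_mul] at h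
    exact (mul_left_cancel₀ (pow_ne_zero m (neg_ne_zero.2 one_ne_zero)) h).symm
  rw [hprod, ← Real.sqrt_sq hpos.le, show P ^ 2 = 2 * m + 1 by exact_mod_cast hsq]

lemma stdAddChar_ne_one {q : ℕ} [NeZero q] [Nontrivial (ZMod q)] :
    (ZMod.stdAddChar : AddChar (ZMod q) ℂ) ≠ 1 := by
  simpa using ZMod.isPrimitive_stdAddChar q one_ne_zero

lemma quadGaussSum_one_sq (m : ℕ) [Fact (2 * m + 1).Prime] :
    quadGaussSum (2 * m + 1) 1 ^ 2 = (-1) ^ m * (2 * m + 1) := by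
  have hC : ringChar ℂ ≠ 2 := by simp [ringChar.eq_zero]
  have hF := ringChar_zmod_two_mul_add_one_ne_two m
  simp_rw [quadGaussSum, one_mul]
  rw [sq_sum_addChar_sq hF hC stdAddChar_ne_one, quadraticChar_neg_one hF, ZMod.card,
    ZMod.χ₄_eq_neg_one_pow (by omega), show (2 * m + 1) / 2 = m by omega]
  push_cast
  rfl

lemma quadGaussSum_one_eq_gaussProduct (m : ℕ) [Fact (2 * m + 1).Prime] :
    quadGaussSum (2 * m + 1) 1 = (-1) ^ m * gaussProduct m (oddRoot m) := by
  have hw := isPrimitiveRoot_oddRoot m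
  obtain ⟨ε, hε, hsum⟩ : ∃ ε : ℤ, (ε = 1 ∨ ε = -1) ∧
      quadGaussSum (2 * m + 1) 1 = ε * gaussProduct m (oddRoot m) := by
    rcases sq_eq_sq_iff_eq_or_eq_neg.1
      ((quadGaussSum_one_sq m).trans (gaussProduct_sq_of_isPrimitiveRoot hw).symm) with h | h
    · exact ⟨1, by simp [h]⟩
    · exact ⟨-1, by simp [h]⟩
  have hmod := intCast_eq_neg_one_pow_of_aeval_gaussPolynomial hw
    ((aeval_oddRoot_gaussPolynomial m).trans hsum)
  have hsign : ε = (-1) ^ m := by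
    refine Int.cast_injOn_of_ringChar_ne_two (ringChar_zmod_two_mul_add_one_ne_two m) ?_ ?_
      (by simpa using hmod)
    · rcases hε with h | h <;> simp [h]
    · rcases neg_one_pow_eq_or ℤ m with h | h <;> simp [h]
  rw [hsum, hsign]
  push_cast
  rfl

lemma quadGaussSum_one_eq (m : ℕ) [Fact (2 * m + 1).Prime] :
    quadGaussSum (2 * m + 1) 1 =
      √(2 * m + 1 : ℝ) * Complex.exp (gaussPhase (2 * m + 1) * Complex.I) := by
  have hiff : (2 * m + 1) % 4 = 1 ↔ Even m := by
    rw [Nat.even_iff]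
    omega
  rw [quadGaussSum_one_eq_gaussProduct, neg_one_pow_mul_gaussProduct_oddRoot, exp_gaussPhase_mul_I,
    mul_comm]
  simp only [hiff]

end Sign

/-- The modulus `q = 1` is included so that even and odd powers of a prime are treated alike. -/
lemma quadGaussSum_eq {q : ℕ} [NeZero q] (hodd : Odd q) (hq : q = 1 ∨ q.Prime) {c : ℤ}
    (hc : IsCoprime c q) :
    quadGaussSum q c = √q * jacobiSym c q * Complex.exp (gaussPhase q * Complex.I) := by
  rcases hq with rfl | hq
  · rw [quadGaussSum, Fintype.sum_unique, Subsingleton.elim (_ * _) (0 : ZMod 1)]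
    simp [gaussPhase]
  obtain ⟨m, rfl⟩ := hodd
  have : Fact (2 * m + 1).Prime := ⟨hq⟩
  have hF := ringChar_zmod_two_mul_add_one_ne_two m
  have hc0 : (c : ZMod (2 * m + 1)) ≠ 0 := by
    rw [Ne, ZMod.intCast_zmod_eq_zero_iff_dvd]
    exact fun h => (Nat.prime_iff_prime_int.1 hq).not_isUnit (hc.symm.isUnit_of_dvd h)
  have hone := quadGaussSum_one_eq m
  simp only [quadGaussSum, one_mul] at hone ⊢
  rw [sum_addChar_mul_sq hF stdAddChar_ne_one hc0, hone, ← jacobiSym.legendreSym.to_jacobiSym,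
    legendreSym]
  push_cast
  ring

lemma jacobiSym_neg_mul_exp_gaussPhase (c : ℤ) {q : ℕ} (hq : Odd q) :
    (jacobiSym (-c) q : ℂ) * Complex.exp (gaussPhase q * Complex.I) =
      jacobiSym c q * Complex.exp (-(gaussPhase q * Complex.I)) := by
  rw [jacobiSym.neg c hq, Complex.exp_neg, exp_gaussPhase_mul_I]
  have hmod : q % 4 = 1 ∨ q % 4 = 3 := by
    have := Nat.odd_iff.1 hq
    omega
  rcases hmod with h | h
  · simp [h, ZMod.χ₄_nat_one_mod_four h]
  · simp [h, ZMod.χ₄_nat_three_mod_four h]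

end QuadraticGaussSum

section StationaryPhase

variable {R : Type*} [CommRing R]

lemma mul_sub_inv_eq_zero_iff [IsLocalRing R] (h2 : IsUnit (2 : R)) (d : R) (x : Rˣ) :
    d * (x - ↑x⁻¹) = 0 ↔ d * (x - 1) = 0 ∨ d * (x + 1) = 0 := by
  have hfactor : d * ((x : R) - ↑x⁻¹) * x = d * (x - 1) * (x + 1) := by
    linear_combination -d * x.inv_mul
  rw [← x.mul_left_eq_zero, hfactor]
  constructor
  · intro h
    have hsum : IsUnit (((x : R) + 1) + -(x - 1)) := by
      convert h2 using 1
      ring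
    rcases IsLocalRing.isUnit_or_isUnit_of_isUnit_add hsum with hu | hu
    · exact Or.inl (hu.mul_left_eq_zero.1 h)
    · right
      rw [IsUnit.neg_iff] at hu
      rwa [mul_right_comm, hu.mul_left_eq_zero] at h
  · rintro (h | h)
    · rw [h, zero_mul]
    · rw [mul_right_comm, h, zero_mul]

variable [Fintype R] [DecidableEq R]

lemma sum_units_mul_add_mul_inv {A : Type*} [AddCommMonoid A] (f : R → A) {a b s : Rˣ}
    (hs : s ^ 2 = a * b) :
    ∑ x : Rˣ, f (a * x + b * ↑x⁻¹) = ∑ x : Rˣ, f (s * x + s * ↑x⁻¹) := by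
  refine (Fintype.sum_equiv (Equiv.mulLeft (b * s⁻¹)) _ _ fun x => ?_).symm
  have hlin : a * (b * s⁻¹ * x) = s * x := by
    rw [← mul_assoc, ← mul_assoc, ← hs, sq, mul_inv_cancel_right]
  have hinv : b * (b * s⁻¹ * x)⁻¹ = s * x⁻¹ := by
    rw [mul_assoc, mul_inv, mul_inv_cancel_left, mul_inv, inv_inv]
  simp only [Equiv.coe_mulLeft, ← Units.val_mul, hlin, hinv]

variable {A : Type*} [CommRing A] [IsDomain A] [CharZero A] {ψ : AddChar R A}

/-- Averaging over the translations `x ↦ x * (1 + d * t)`. -/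
lemma sum_units_addChar_eq_sum_critical (hψ : ψ.IsPrimitive) (a b : R) {d : R} (hd : d ^ 2 = 0) :
    ∑ x : Rˣ, ψ (a * x + b * ↑x⁻¹) =
      ∑ x ∈ {x : Rˣ | d * (a * ↑x - b * ↑x⁻¹) = 0}, ψ (a * x + b * ↑x⁻¹) := by
  have htranslate (t : R) : ∑ x : Rˣ, ψ (a * x + b * ↑x⁻¹) =
      ∑ x : Rˣ, ψ (a * x + b * ↑x⁻¹) * ψ (t * (d * (a * ↑x - b * ↑x⁻¹))) := by
    let u : Rˣ := ⟨1 + d * t, 1 - d * t, by linear_combination -t ^ 2 * hd,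
      by linear_combination -t ^ 2 * hd⟩
    rw [← Fintype.sum_equiv (Equiv.mulLeft u) _ _ fun x => rfl]
    refine Finset.sum_congr rfl fun x _ => ?_
    rw [← AddChar.map_add_eq_mul]
    congr 1
    simp only [Equiv.coe_mulLeft, mul_inv, Units.val_mul, u, Units.inv_mk]
    ring
  have hcard : (Fintype.card R : A) ≠ 0 := Nat.cast_ne_zero.2 Fintype.card_ne_zero
  refine mul_left_cancel₀ hcard ?_
  calc Fintype.card R * ∑ x : Rˣ, ψ (a * x + b * ↑x⁻¹)
      = ∑ t : R, ∑ x : Rˣ, ψ (a * x + b * ↑x⁻¹) * ψ (t * (d * (a * ↑x - b * ↑x⁻¹))) := by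
        simp_rw [← htranslate, Finset.sum_const, Finset.card_univ, nsmul_eq_mul]
    _ = ∑ x : Rˣ, ψ (a * x + b * ↑x⁻¹) * ∑ t : R, ψ (t * (d * (a * ↑x - b * ↑x⁻¹))) := by
        simp_rw [Finset.mul_sum]
        exact Finset.sum_comm
    _ = Fintype.card R * ∑ x ∈ {x : Rˣ | d * (a * ↑x - b * ↑x⁻¹) = 0}, ψ (a * x + b * ↑x⁻¹) := by
        simp_rw [AddChar.sum_mulShift _ hψ, Finset.sum_filter, Finset.mul_sum]
        exact Finset.sum_congr rfl fun x _ => by split_ifs <;> simp [mul_comm]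

lemma sum_units_near_one {B : Type*} [AddCommMonoid B] (f : R → B) {d : R}
    (hd : ∀ r, d * r = 0 → r ^ 3 = 0) :
    ∑ x ∈ {x : Rˣ | d * (↑x - 1) = 0}, f (x + ↑x⁻¹) = ∑ r : R with d * r = 0, f (2 + r ^ 2) := by
  have hinv (x : Rˣ) (hx : d * (↑x - 1) = 0) : (↑x⁻¹ : R) = 1 - (x - 1) + (x - 1) ^ 2 := by
    refine Units.inv_eq_of_mul_eq_one_right ?_
    linear_combination hd _ hx
  refine Finset.sum_bij (fun x _ => (x : R) - 1) ?_ ?_ ?_ ?_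
  · simp
  · intro x _ y _ h
    exact Units.ext (sub_left_injective h)
  · intro r hr
    have hr3 := hd r (Finset.mem_filter.1 hr).2
    let x : Rˣ := ⟨1 + r, 1 - r + r ^ 2, by linear_combination hr3, by linear_combination hr3⟩
    refine ⟨x, ?_, ?_⟩
    · simpa [x] using hr
    · simp [x]
  · intro x hx
    rw [hinv x (Finset.mem_filter.1 hx).2]
    ring_nf

variable [IsLocalRing R]

lemma sum_units_critical {B : Type*} [AddCommMonoid B] (f : R → B) (h2 : IsUnit (2 : R)) {d : R}
    (hd0 : d ≠ 0) (hd : ∀ r, d * r = 0 → r ^ 3 = 0) :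
    ∑ x ∈ {x : Rˣ | d * (↑x - ↑x⁻¹) = 0}, f (x + ↑x⁻¹) =
      ∑ r : R with d * r = 0, f (2 + r ^ 2) + ∑ r : R with d * r = 0, f (-(2 + r ^ 2)) := by
  have hdisj : Disjoint (Finset.univ.filter fun x : Rˣ => d * ((x : R) - 1) = 0)
      (Finset.univ.filter fun x : Rˣ => d * ((x : R) + 1) = 0) := by
    refine Finset.disjoint_filter.2 fun x _ h1 h2' => hd0 (h2.mul_left_eq_zero.1 ?_)
    linear_combination h2' - h1
  have hneg : ∑ x ∈ {x : Rˣ | d * (↑x + 1) = 0}, f (x + ↑x⁻¹) =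
      ∑ x ∈ {x : Rˣ | d * (↑x - 1) = 0}, f (-(x + ↑x⁻¹)) := by
    refine Finset.sum_equiv (Equiv.neg Rˣ) (fun x => ?_) fun x _ => ?_
    · simp only [Finset.mem_filter_univ, Equiv.neg_apply, Units.val_neg]
      rw [← neg_add', mul_neg, neg_eq_zero]
    · simp only [Equiv.neg_apply, inv_neg, Units.val_neg]
      ring_nf
  simp_rw [mul_sub_inv_eq_zero_iff h2]
  rw [Finset.filter_or, Finset.sum_union hdisj, hneg, sum_units_near_one f hd,
    sum_units_near_one (fun y => f (-y)) hd]

lemma sum_units_addChar_eq_quadratic (hψ : ψ.IsPrimitive) (h2 : IsUnit (2 : R)) {d : R}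
    (hd0 : d ≠ 0) (hd2 : d ^ 2 = 0) (hd : ∀ r, d * r = 0 → r ^ 3 = 0) (s : Rˣ) :
    ∑ x : Rˣ, ψ (s * x + s * ↑x⁻¹) =
      ψ (2 * s) * ∑ r : R with d * r = 0, ψ (s * r ^ 2) +
        ψ (-(2 * s)) * ∑ r : R with d * r = 0, ψ (-s * r ^ 2) := by
  have hcritical (x : Rˣ) : d * (s * x - s * ↑x⁻¹) = 0 ↔ d * (x - ↑x⁻¹) = 0 := by
    rw [← mul_sub, mul_left_comm, s.mul_right_eq_zero]
  simp_rw [sum_units_addChar_eq_sum_critical hψ _ _ hd2, hcritical, ← mul_add]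
  rw [sum_units_critical (fun y => ψ (s * y)) h2 hd0 hd, Finset.mul_sum, Finset.mul_sum]
  simp_rw [← AddChar.map_add_eq_mul]
  congr! 3 <;> ring_nf

end StationaryPhase

section ZModSums

lemma sum_range_mul_of_periodic {M : Type*} [AddCommMonoid M] {f : ℕ → M} {q : ℕ}
    (hf : Function.Periodic f q) (a : ℕ) :
    ∑ k ∈ Finset.range (a * q), f k = a • ∑ k ∈ Finset.range q, f k := by
  induction a with
  | zero => simp
  | succ a ih =>
    rw [Nat.succ_mul, Finset.sum_range_add, ih, succ_nsmul]
    congr 1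
    exact Finset.sum_congr rfl fun k _ => by
      rw [add_comm]
      exact hf.nat_mul a k

lemma sum_range_natCast_zmod {M : Type*} [AddCommMonoid M] {q : ℕ} [NeZero q] (g : ZMod q → M) :
    ∑ k ∈ Finset.range q, g k = ∑ x, g x := by
  refine Finset.sum_nbij' (fun k => (k : ZMod q)) ZMod.val (by simp) ?_ ?_ (by simp) (by simp)
  · exact fun x _ => Finset.mem_range.2 (ZMod.val_lt x)
  · exact fun k hk => ZMod.val_natCast_of_lt (Finset.mem_range.1 hk)

lemma natCast_mul_eq_zero_iff_dvd_val {N a b : ℕ} [NeZero N] (hN : N = a * b) (y : ZMod N) :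
    (b : ZMod N) * y = 0 ↔ a ∣ y.val := by
  have hb : 0 < b := Nat.pos_of_ne_zero fun h => NeZero.ne N (by rw [hN, h, mul_zero])
  have hdvd : N ∣ b * y.val ↔ a ∣ y.val := by
    rw [mul_comm a] at hN
    nth_rw 1 [hN]
    exact Nat.mul_dvd_mul_iff_left hb
  rw [← hdvd, ← ZMod.natCast_eq_zero_iff, Nat.cast_mul, ZMod.natCast_zmod_val]

lemma sum_zmod_filter_natCast_mul_eq_zero {M : Type*} [AddCommMonoid M] {N a b : ℕ} [NeZero N]
    (hN : N = a * b) (g : ZMod N → M) :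
    ∑ y with (b : ZMod N) * y = 0, g y = ∑ u ∈ Finset.range b, g (a * u) := by
  have ha : 0 < a := Nat.pos_of_ne_zero fun h => NeZero.ne N (by rw [hN, h, zero_mul])
  simp_rw [natCast_mul_eq_zero_iff_dvd_val hN]
  symm
  refine Finset.sum_nbij' (fun u : ℕ => (a * u : ZMod N)) (fun y => y.val / a) ?_ ?_ ?_ ?_ (by simp)
  · intro u _
    rw [Finset.mem_filter_univ, ← natCast_mul_eq_zero_iff_dvd_val hN, ← mul_assoc,
      mul_comm (b : ZMod N), ← Nat.cast_mul, ← hN, ZMod.natCast_self, zero_mul]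
  · intro y _
    rw [Finset.mem_range, Nat.div_lt_iff_lt_mul ha, mul_comm, ← hN]
    exact ZMod.val_lt y
  · intro u hu
    have hlt : a * u < N := hN ▸ Nat.mul_lt_mul_of_pos_left (Finset.mem_range.1 hu) ha
    rw [← Nat.cast_mul, ZMod.val_natCast_of_lt hlt, Nat.mul_div_cancel_left _ ha]
  · intro y hy
    rw [← Nat.cast_mul, Nat.mul_div_cancel' (Finset.mem_filter.1 hy).2, ZMod.natCast_zmod_val]

lemma sum_zmod_filter_stdAddChar_sq {N a q : ℕ} [NeZero N] [NeZero q] (hN : N = a ^ 2 * q)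
    (c : ℤ) :
    ∑ y with ((a * q : ℕ) : ZMod N) * y = 0, ZMod.stdAddChar ((c : ZMod N) * y ^ 2) =
      a * quadGaussSum q c := by
  have ha : (a : ℂ) ≠ 0 := Nat.cast_ne_zero.2 fun h => NeZero.ne N (by simp [hN, h])
  have hq : (q : ℂ) ≠ 0 := Nat.cast_ne_zero.2 (NeZero.ne q)
  have hterm (u : ℕ) : (ZMod.stdAddChar ((c : ZMod N) * ((a : ZMod N) * (u : ZMod N)) ^ 2) : ℂ) =
      ZMod.stdAddChar ((c : ZMod q) * (u : ZMod q) ^ 2) := by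
    have hlhs := ZMod.stdAddChar_coe (N := N) (c * (a * u) ^ 2)
    have hrhs := ZMod.stdAddChar_coe (N := q) (c * u ^ 2)
    push_cast at hlhs hrhs
    rw [hlhs, hrhs, hN]
    congr 1
    push_cast
    field_simp
  rw [sum_zmod_filter_natCast_mul_eq_zero (hN.trans (by ring)),
    Finset.sum_congr rfl fun u _ => hterm u,
    sum_range_mul_of_periodic (fun u => by simp), nsmul_eq_mul,
    sum_range_natCast_zmod fun u : ZMod q => ZMod.stdAddChar ((c : ZMod q) * u ^ 2), quadGaussSum]

end ZModSums

section KloostermanSum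

lemma isLocalRing_zmod_prime_pow {p n : ℕ} (hp : p.Prime) (hn : n ≠ 0) :
    IsLocalRing (ZMod (p ^ n)) := by
  have : Fact p.Prime := ⟨hp⟩
  have : Nontrivial (ZMod (p ^ n)) := ZMod.nontrivial_iff.2 (Nat.one_lt_pow hn hp.one_lt).ne'
  exact IsLocalRing.of_surjective' (PadicInt.toZModPow n) (ZMod.ringHom_surjective _)

lemma isUnit_two_zmod {N : ℕ} (hN : Odd N) : IsUnit (2 : ZMod N) :=
  (ZMod.isUnit_iff_coprime 2 N).2 hN.coprime_two_left

lemma sum_units_stdAddChar_eq_quadGaussSum {N a q : ℕ} [NeZero N] [NeZero q]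
    [IsLocalRing (ZMod N)] (hN : N = a ^ 2 * q) (hodd : Odd N) (ha : 1 < a) (hqa : q ∣ a) {s : ℤ}
    (hs : IsUnit (s : ZMod N)) :
    ∑ x : (ZMod N)ˣ, (ZMod.stdAddChar (s * x + s * ↑x⁻¹ : ZMod N) : ℂ) =
      a * (ZMod.stdAddChar (2 * s : ZMod N) * quadGaussSum q s +
        ZMod.stdAddChar (-(2 * s) : ZMod N) * quadGaussSum q (-s)) := by
  have hq : 0 < q := NeZero.pos q
  have hd0 : ((a * q : ℕ) : ZMod N) ≠ 0 := by
    rw [Ne, ZMod.natCast_eq_zero_iff]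
    refine Nat.not_dvd_of_pos_of_lt (by positivity) ?_
    rw [hN, sq]
    gcongr
    exact lt_mul_of_one_lt_left (by omega) ha
  have hd2 : ((a * q : ℕ) : ZMod N) ^ 2 = 0 := by
    rw [← Nat.cast_pow, ZMod.natCast_eq_zero_iff]
    exact ⟨q, by rw [hN]; ring⟩
  have hd (r : ZMod N) (hr : ((a * q : ℕ) : ZMod N) * r = 0) : r ^ 3 = 0 := by
    obtain ⟨u, hu⟩ := (natCast_mul_eq_zero_iff_dvd_val (hN.trans (by ring)) r).1 hr
    obtain ⟨k, hk⟩ := hqa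
    rw [← ZMod.natCast_zmod_val r, hu, ← Nat.cast_pow, ZMod.natCast_eq_zero_iff, hN]
    exact ⟨k * u ^ 3, by linear_combination (a ^ 2 * u ^ 3) * hk⟩
  have hsum := sum_units_addChar_eq_quadratic (ZMod.isPrimitive_stdAddChar N) (isUnit_two_zmod hodd)
    hd0 hd2 hd hs.unit
  have hneg := sum_zmod_filter_stdAddChar_sq hN (-s)
  rw [Int.cast_neg, Int.cast_neg] at hneg
  rw [IsUnit.unit_spec, sum_zmod_filter_stdAddChar_sq hN, hneg] at hsum
  rw [hsum]
  ring

lemma stdAddChar_two_mul_intCast {N : ℕ} [NeZero N] (s : ℤ) :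
    ZMod.stdAddChar (2 * s : ZMod N) = Complex.exp (4 * Real.pi * s / N * Complex.I) := by
  have h := ZMod.stdAddChar_coe (N := N) (2 * s)
  push_cast at h
  rw [h]
  ring_nf

lemma jacobiSym_sq_mul_right {s : ℤ} {a q : ℕ} [NeZero a] [NeZero q] (hs : IsCoprime s a) :
    jacobiSym s (a ^ 2 * q) = jacobiSym s q := by
  rw [jacobiSym.mul_right, jacobiSym.pow_right,
    jacobiSym.sq_one (Int.isCoprime_iff_gcd_eq_one.1 hs), one_mul]

lemma gaussPhase_sq_mul {a : ℕ} (ha : Odd a) (q : ℕ) : gaussPhase (a ^ 2 * q) = gaussPhase q := by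
  have hsq : a ^ 2 % 4 = 1 := by
    obtain ⟨k, rfl⟩ := ha
    ring_nf
    omega
  rw [gaussPhase, Nat.mul_mod, hsq, one_mul, Nat.mod_mod, gaussPhase]

lemma sum_units_stdAddChar_eq_cos {N a q : ℕ} [NeZero N] [IsLocalRing (ZMod N)]
    (hN : N = a ^ 2 * q) (hodd : Odd N) (ha : 1 < a) (hqa : q ∣ a) (hq : q = 1 ∨ q.Prime) {s : ℤ}
    (hs : IsUnit (s : ZMod N)) :
    ∑ x : (ZMod N)ˣ, (ZMod.stdAddChar (s * x + s * ↑x⁻¹ : ZMod N) : ℂ) =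
      √N * (2 * jacobiSym s N * (Real.cos (4 * Real.pi * s / N + gaussPhase N) : ℝ)) := by
  have : NeZero a := ⟨by omega⟩
  have : NeZero q := ⟨by rcases hq with rfl | hq; exacts [one_ne_zero, hq.ne_zero]⟩
  obtain ⟨hodda, hoddq⟩ : Odd a ∧ Odd q := by
    rw [hN, Nat.odd_mul, Nat.odd_pow_iff two_ne_zero] at hodd
    exact hodd
  have hcop : IsCoprime s N := ((ZMod.coe_int_isUnit_iff_isCoprime s N).1 hs).symm
  have hcopa : IsCoprime s a := hcop.of_isCoprime_of_dvd_right (by simp [hN, sq, mul_assoc])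
  have hcopq : IsCoprime s q := hcop.of_isCoprime_of_dvd_right (by simp [hN])
  have hsqrt : √(N : ℝ) = a * √q := by
    rw [hN]
    push_cast
    rw [Real.sqrt_mul (by positivity), Real.sqrt_sq (by positivity)]
  have hneg : quadGaussSum q (-s) =
      √q * jacobiSym s q * Complex.exp (-(gaussPhase q * Complex.I)) := by
    rw [mul_assoc, ← jacobiSym_neg_mul_exp_gaussPhase s hoddq, ← mul_assoc,
      ← quadGaussSum_eq hoddq hq hcopq.neg_left]
    push_cast
    rfl
  rw [sum_units_stdAddChar_eq_quadGaussSum hN hodd ha hqa hs, quadGaussSum_eq hoddq hq hcopq, hneg,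
    AddChar.map_neg_eq_inv, stdAddChar_two_mul_intCast, ← Complex.exp_neg]
  have hphase : gaussPhase N = gaussPhase q := by rw [hN, gaussPhase_sq_mul hodda]
  have hjac : jacobiSym s N = jacobiSym s q := by rw [hN, jacobiSym_sq_mul_right hcopa]
  rw [hphase, hjac, hsqrt, Complex.ofReal_cos, Complex.cos]
  push_cast
  rw [neg_mul, add_mul, neg_add, Complex.exp_add, Complex.exp_add]
  ring

lemma eMod_eq_stdAddChar (q : ℕ) [NeZero q] (x : ZMod q) : eMod q x = ZMod.stdAddChar x := by
  rw [eMod, eC, ZMod.stdAddChar_apply, ZMod.toCircle_apply]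
  congr 1
  push_cast
  ring

lemma sum_Icc_not_dvd_eq_sum_units {M : Type*} [AddCommMonoid M] {p n : ℕ} [NeZero (p ^ n)]
    (hp : p.Prime) (hn : n ≠ 0) (g : ZMod (p ^ n) → M) :
    ∑ x ∈ (Finset.Icc 1 (p ^ n)).filter (fun x => ¬ p ∣ x), g x = ∑ x : (ZMod (p ^ n))ˣ, g x := by
  have hunit (x : ℕ) : IsUnit (x : ZMod (p ^ n)) ↔ ¬ p ∣ x :=
    ZMod.isUnit_natCast_iff_not_dvd_pow hp (Nat.pos_of_ne_zero hn)
  symm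
  refine Finset.sum_bij (fun x _ => (x : ZMod (p ^ n)).val) ?_ ?_ ?_ (by simp)
  · intro x _
    have hx : ¬ p ∣ (x : ZMod (p ^ n)).val := by
      rw [← hunit, ZMod.natCast_zmod_val]
      exact x.isUnit
    rw [Finset.mem_filter, Finset.mem_Icc]
    exact ⟨⟨Nat.pos_of_ne_zero fun h => hx (h ▸ dvd_zero p), (ZMod.val_lt _).le⟩, hx⟩
  · exact fun x _ y _ h => Units.ext (ZMod.val_injective _ h)
  · intro x hx
    rw [Finset.mem_filter, Finset.mem_Icc] at hx
    have hlt : x < p ^ n := lt_of_le_of_ne hx.1.2 fun h => hx.2 (h ▸ dvd_pow_self p hn)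
    exact ⟨((hunit x).2 hx.2).unit, Finset.mem_univ _, ZMod.val_natCast_of_lt hlt⟩

lemma klFull_eq_sum_units {p n : ℕ} [NeZero (p ^ n)] (hp : p.Prime) (hn : n ≠ 0)
    (a b : ZMod (p ^ n)) :
    klFull p n a b =
      (√((p : ℝ) ^ n) : ℂ)⁻¹ * ∑ x : (ZMod (p ^ n))ˣ,
        ZMod.stdAddChar (a * (x : ZMod (p ^ n)) + b * (↑x⁻¹ : ZMod (p ^ n))) := by
  rw [klFull, klPartial,
    sum_Icc_not_dvd_eq_sum_units hp hn fun x => eMod (p ^ n) (a * x + b * x⁻¹)]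
  simp_rw [eMod_eq_stdAddChar, ZMod.inv_coe_unit, Complex.ofReal_inv]

lemma exists_pow_eq_sq_mul (p : ℕ) {n : ℕ} (hn : 2 ≤ n) :
    ∃ m q : ℕ, m ≠ 0 ∧ p ^ n = (p ^ m) ^ 2 * q ∧ q ∣ p ^ m ∧ (q = 1 ∨ q = p) := by
  rcases Nat.even_or_odd' n with ⟨m, rfl | rfl⟩
  · exact ⟨m, 1, by omega, by ring, one_dvd _, Or.inl rfl⟩
  · exact ⟨m, p, by omega, by ring, dvd_pow_self p (by omega), Or.inr rfl⟩

lemma gaussPhase_pow {p : ℕ} (hp : Odd p) (n : ℕ) :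
    gaussPhase (p ^ n) = if Even n ∨ p % 4 = 1 then 0 else Real.pi / 2 := by
  rcases Nat.even_or_odd' n with ⟨m, rfl | rfl⟩
  · rw [show p ^ (2 * m) = (p ^ m) ^ 2 * 1 by ring, gaussPhase_sq_mul hp.pow]
    simp [gaussPhase]
  · rw [show p ^ (2 * m + 1) = (p ^ m) ^ 2 * p by ring, gaussPhase_sq_mul hp.pow]
    simp [gaussPhase]

lemma klFull_eq_cos {p n : ℕ} (hp : p.Prime) (hodd : Odd p) (hn : 2 ≤ n) {a b : (ZMod (p ^ n))ˣ}
    {s : ℤ} (hs : (s : ZMod (p ^ n)) ^ 2 = a * b) :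
    klFull p n a b =
      2 * jacobiSym s (p ^ n) *
        (Real.cos (4 * Real.pi * s / (p : ℝ) ^ n + gaussPhase (p ^ n)) : ℝ) := by
  have : NeZero (p ^ n) := ⟨pow_ne_zero n hp.ne_zero⟩
  have hn0 : n ≠ 0 := by omega
  have := isLocalRing_zmod_prime_pow hp hn0
  have hsunit : IsUnit (s : ZMod (p ^ n)) :=
    (isUnit_pow_iff two_ne_zero).1 (hs ▸ (a * b).isUnit)
  have hsq : hsunit.unit ^ 2 = a * b := Units.ext hs
  have hsqrt : (√((p : ℝ) ^ n) : ℂ) ≠ 0 :=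
    Complex.ofReal_ne_zero.2 (Real.sqrt_pos.2 (pow_pos (Nat.cast_pos.2 hp.pos) n)).ne'
  obtain ⟨m, q, hm, hN, hqm, hq⟩ := exists_pow_eq_sq_mul p hn
  have hqp : q = 1 ∨ q.Prime := hq.imp_right fun h => by rwa [h]
  rw [klFull_eq_sum_units hp hn0, sum_units_mul_add_mul_inv _ hsq, IsUnit.unit_spec,
    sum_units_stdAddChar_eq_cos hN hodd.pow (Nat.one_lt_pow hm hp.one_lt) hqm hqp hsunit,
    Nat.cast_pow, inv_mul_cancel_left₀ hsqrt]

end KloostermanSum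

theorem kloosterman_eval_general {p n : ℕ} (hp : p.Prime) (hodd : Odd p) (hn : 2 ≤ n) {a b s : ℤ}
    (hab : ¬ (p : ℤ) ∣ a * b) (hs : s ^ 2 ≡ a * b [ZMOD (p : ℤ) ^ n]) :
    klFull p n a b =
      2 * (jacobiSym s (p ^ n) : ℂ) *
        (Real.cos (4 * Real.pi * s / (p : ℝ) ^ n +
          (if Even n ∨ p % 4 = 1 then 0 else Real.pi / 2)) : ℝ) := by
  have hs' : (s : ZMod (p ^ n)) ^ 2 = a * b := by
    rw [← Nat.cast_pow, ← ZMod.intCast_eq_intCast_iff] at hs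
    exact_mod_cast hs
  have hunit : IsUnit ((a : ZMod (p ^ n)) * b) := by
    rw [← Int.cast_mul, ZMod.coe_int_isUnit_iff_isCoprime, Nat.cast_pow]
    exact IsCoprime.pow_left ((Nat.prime_iff_prime_int.1 hp).coprime_iff_not_dvd.2 hab)
  obtain ⟨u, hu⟩ := isUnit_of_mul_isUnit_left hunit
  obtain ⟨v, hv⟩ := isUnit_of_mul_isUnit_right hunit
  rw [← hu, ← hv] at hs' ⊢
  rw [klFull_eq_cos hp hodd hn hs', gaussPhase_pow hodd]

/-- For `n ≥ 2` and `p ≥ 2n-5` an odd prime, if `a` is a nonzero square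
modulo `p` and `s² ≡ a (mod p^n)`, then
`Kl_{p^n}(a,1) = 2 (s/p^n) cos(4πs/p^n + θ_{p^n})` with `θ_{p^n}` as indicated. -/
theorem kloosterman_eval (n : ℕ) (hn : 2 ≤ n) (p : ℕ) (hp : p.Prime) (hodd : Odd p)
    (hsize : 2 * n - 5 ≤ p) (a : ℤ) (ha : ¬ (p : ℤ) ∣ a)
    (hsq : ∃ y : ZMod p, y ^ 2 = (a : ZMod p))
    (s : ℤ) (hs : s ^ 2 ≡ a [ZMOD ((p : ℤ) ^ n)]) :
    klFull p n (a : ZMod (p ^ n)) 1 =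
      2 * (jacobiSym s (p ^ n) : ℂ) *
        (Real.cos (4 * Real.pi * (s : ℝ) / (p : ℝ) ^ n +
          (if Even n ∨ p % 4 = 1 then 0 else Real.pi / 2)) : ℝ) := by
  have h := kloosterman_eval_general hp hodd hn (a := a) (b := 1) (by rwa [mul_one])
    (by rwa [mul_one])
  rwa [Int.cast_one] at h

end
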